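/- Let p be an odd prime. The coefficient of t² in the polynomial B(t) = b_p(t,−t) ∈ 𝔽_p[t] equals 3·32⁻¹ in 𝔽_p (note 32 is invertible in 𝔽_p since p is odd). -/

import Mathlib

open Polynomial

/-- `bp p` is the coefficient of `x^(2A)` in `((x-1)^2 (x-t1)(x-t2))^A`, where
`A = (p^2-1)/4`, viewed as a polynomial in `x` over the polynomial ring in two
variables over `ZMod p`. -/
noncomputable def bp (p : ℕ) : MvPolynomial (Fin 2) (ZMod p) :=
  ((((X : Polynomial (MvPolynomial (Fin 2) (ZMod p))) - 1) ^ 2 *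
      (X - C (MvPolynomial.X 0)) * (X - C (MvPolynomial.X 1))) ^ ((p ^ 2 - 1) / 4)).coeff
    (2 * ((p ^ 2 - 1) / 4))

/-- `Bp p` is the univariate polynomial `B(t) = b_p(t, -t)` over `ZMod p`. -/
noncomputable def Bp (p : ℕ) : Polynomial (ZMod p) :=
  MvPolynomial.aeval ![(X : Polynomial (ZMod p)), -X] (bp p)

/-!
Since `(x - 1) ^ 2 * (x - t) * (x + t) = (x - 1) ^ 2 * (x ^ 2 - t ^ 2)`, expanding the `A`-th power
of `x ^ 2 - t ^ 2` gives `B(t) = ∑ k, (-1) ^ k * A.choose k * (2 * A).choose (2 * k) * t ^ (2 * k)`.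
The coefficient of `t ^ 2` is therefore `-A ^ 2 * (2 * A - 1)`, and `4 * A = p ^ 2 - 1 = -1` modulo
`p` turns it into `3 / 32`.
-/

theorem coeff_mul_X_pow_add_C_pow {R : Type*} [CommSemiring R] (q : R[X]) (a : R) (m n : ℕ) :
    (q * (X ^ m + C a) ^ n).coeff (m * n) =
      ∑ k ∈ Finset.range (n + 1), n.choose k * a ^ k * q.coeff (m * k) := by
  rw [add_comm, add_pow, Finset.mul_sum, finsetSum_coeff]
  refine Finset.sum_congr rfl fun k hk => ?_
  have split_exponent : m * n = m * k + m * (n - k) := by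
    rw [← mul_add, Nat.add_sub_cancel' (Finset.mem_range_succ_iff.mp hk)]
  have factor_scalars : q * (C a ^ k * (X ^ m) ^ (n - k) * (n.choose k : R[X])) =
      C (n.choose k * a ^ k) * (q * X ^ (m * (n - k))) := by
    simp only [C_mul, C_pow, map_natCast, pow_mul]
    ring
  rw [factor_scalars, coeff_C_mul, split_exponent, coeff_mul_X_pow]

theorem choose_two_mul_two_add (n : ℕ) : (2 * n).choose 2 + n = 2 * n ^ 2 := by
  induction n with
  | zero => rfl
  | succ n ih =>
    have pascal : (2 * n + 2).choose 2 = 4 * n + 1 + (2 * n).choose 2 := by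
      rw [Nat.choose_succ_succ' (2 * n + 1) 1, Nat.choose_succ_succ' (2 * n) 1]
      simp only [Nat.choose_one_right, Nat.reduceAdd]
      ring
    rw [mul_add_one, pascal]
    linarith

section CommRing

variable {R : Type*} [CommRing R]

theorem coeff_X_sub_C_sq_mul_X_sub_C_mul_X_add_C_pow (s t : R) (n : ℕ) :
    (((X - C s) ^ 2 * (X - C t) * (X + C t)) ^ n).coeff (2 * n) =
      ∑ k ∈ Finset.range (n + 1),
        (-1) ^ k * n.choose k * (2 * n).choose (2 * k) * s ^ (2 * (n - k)) * t ^ (2 * k) := by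
  have difference_of_squares : ((X - C s) ^ 2 * (X - C t) * (X + C t)) ^ n =
      (X + C (-s)) ^ (2 * n) * (X ^ 2 + C (-t ^ 2)) ^ n := by
    rw [pow_mul, ← mul_pow]
    simp only [C_neg, C_pow]
    ring
  rw [difference_of_squares, coeff_mul_X_pow_add_C_pow]
  refine Finset.sum_congr rfl fun k _ => ?_
  rw [coeff_X_add_C_pow, ← Nat.mul_sub, (even_two_mul _).neg_pow, neg_pow, ← pow_mul]
  ring

theorem neg_mul_choose_two_mul_thirty_two {a : ℕ} (ha : (4 * a + 1 : R) = 0) :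
    -(a * (2 * a).choose 2 : R) * 32 = 3 := by
  have choose_two : ((2 * a).choose 2 + a : R) = 2 * a ^ 2 :=
    mod_cast congrArg (Nat.cast : ℕ → R) (choose_two_mul_two_add a)
  linear_combination -32 * (a : R) * choose_two + (-16 * (a : R) ^ 2 + 12 * a - 3) * ha

end CommRing

theorem Bp_eq_coeff (p : ℕ) :
    Bp p = (((X - C 1) ^ 2 * (X - C X) * (X + C X) : (ZMod p)[X][X]) ^
      ((p ^ 2 - 1) / 4)).coeff (2 * ((p ^ 2 - 1) / 4)) := by
  rw [Bp, bp, ← AlgHom.coe_toRingHom, ← coeff_map]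
  simp

theorem Bp_eq_sum (p : ℕ) :
    Bp p = ∑ k ∈ Finset.range ((p ^ 2 - 1) / 4 + 1),
      C ((-1) ^ k * ((p ^ 2 - 1) / 4).choose k * (2 * ((p ^ 2 - 1) / 4)).choose (2 * k) :
        ZMod p) * X ^ (2 * k) := by
  rw [Bp_eq_coeff, coeff_X_sub_C_sq_mul_X_sub_C_mul_X_add_C_pow]
  simp

theorem coeff_two_mul_Bp (p j : ℕ) :
    (Bp p).coeff (2 * j) =
      (-1) ^ j * ((p ^ 2 - 1) / 4).choose j * (2 * ((p ^ 2 - 1) / 4)).choose (2 * j) := by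
  simp only [Bp_eq_sum, finsetSum_coeff, coeff_C_mul_X_pow, mul_right_inj' two_ne_zero,
    Finset.sum_ite_eq, Finset.mem_range_succ_iff]
  split_ifs with hj
  · rfl
  · simp [Nat.choose_eq_zero_of_lt (not_le.mp hj)]

theorem four_mul_sq_sub_one_div_four_add_one {n : ℕ} (hn : Odd n) :
    4 * ((n ^ 2 - 1) / 4) + 1 = n ^ 2 := by
  have four_dvd : 4 ∣ n ^ 2 - 1 :=
    (by norm_num : 4 ∣ 8).trans (Nat.eight_dvd_sq_sub_one_of_odd hn)
  rw [Nat.mul_div_cancel' four_dvd, Nat.sub_add_cancel (Nat.one_le_pow _ _ hn.pos)]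

theorem stmt6_general (n : ℕ) (hn : Odd n) : (Bp n).coeff 2 = 3 * (32 : ZMod n)⁻¹ := by
  have four_mul_add_one : (4 * ((n ^ 2 - 1) / 4 : ℕ) + 1 : ZMod n) = 0 := by
    simpa using congrArg (Nat.cast : ℕ → ZMod n) (four_mul_sq_sub_one_div_four_add_one hn)
  have coeff_two : (Bp n).coeff 2 =
      -(((n ^ 2 - 1) / 4 : ℕ) * (2 * ((n ^ 2 - 1) / 4)).choose 2) := by
    simpa using coeff_two_mul_Bp n 1
  have coeff_two_mul_thirty_two : (Bp n).coeff 2 * 32 = 3 := by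
    rw [coeff_two, neg_mul_choose_two_mul_thirty_two four_mul_add_one]
  have mul_inv : (32 : ZMod n) * 32⁻¹ = 1 :=
    ZMod.coe_mul_inv_eq_one 32 (hn.coprime_two_left.pow_left 5)
  rw [← coeff_two_mul_thirty_two, mul_assoc, mul_inv, mul_one]

theorem stmt6 (p : ℕ) [Fact p.Prime] (hodd : p % 2 = 1) :
    (Bp p).coeff 2 = 3 * (32 : ZMod p)⁻¹ :=
  stmt6_general p (Nat.odd_iff.mpr hodd)
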